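/- Let ζ ∈ [0, ∞) and α ∈ (0,2). Then there exists a constant C > 0 (depending only on ζ and α) such that for all r, s, z, t, τ > 0: min{ ((r+z)/(r+s+z))^{2ζ} · p_ζ^{(α)}(t,r,z), ((s+z)/(r+s+z))^{2ζ} · p_ζ^{(α)}(τ,z,s) } ≤ C · p_ζ^{(α)}(t+τ,r,s). -/

import Mathlib

open MeasureTheory Real Set Filter

/-- Modified Bessel function of the first kind of order `ν`. -/
noncomputable def besselI (ν x : ℝ) : ℝ :=
  ∑' k : ℕ, (x / 2) ^ (2 * (k : ℝ) + ν) / ((Nat.factorial k : ℝ) * Real.Gamma ((k : ℝ) + ν + 1))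

/-- The Bessel heat kernel `p_ζ^{(2)}(t,r,s)`. -/
noncomputable def besselHeat (ζ t r s : ℝ) : ℝ :=
  (r * s) ^ ((1 : ℝ) / 2 - ζ) / (2 * t) * Real.exp (-(r ^ 2 + s ^ 2) / (4 * t)) *
    besselI (ζ - 1 / 2) (r * s / (2 * t))

/-- `σ` is a family of `α/2`-stable subordinator densities. -/
def IsStableSubordinatorDensity (α : ℝ) (σ : ℝ → ℝ → ℝ) : Prop :=
  (∀ t, 0 < t → ∀ τ, 0 < τ → 0 ≤ σ t τ) ∧
  (∀ t, 0 < t → Measurable (σ t)) ∧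
  (∀ t l : ℝ, 0 < t → 0 ≤ l →
    (∫ τ in Ioi (0 : ℝ), Real.exp (-τ * l) * σ t τ) = Real.exp (-t * l ^ (α / 2)))

/-- The `α/2`-subordinated Bessel heat kernel `p_ζ^{(α)}(t,r,s)`. -/
noncomputable def subKernel (ζ : ℝ) (σ : ℝ → ℝ → ℝ) (t r s : ℝ) : ℝ :=
  ∫ τ in Ioi (0 : ℝ), besselHeat ζ τ r s * σ t τ

/-!
The terms of the series of `I_{ζ-1/2}` are, by the duplication formula, those of `cosh` weighted by
`Γ(k + 1/2) / Γ(k + 1/2 + ζ) ≍ (2k + 1)^{-ζ}`, and `cosh x` concentrates on `2k ≈ x`; hence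
`I_{ζ-1/2}(x) ≍ x^{ζ-1/2} (1 + x)^{-ζ} eˣ` and `p_ζ^{(2)}` is comparable to a Gaussian with an
algebraic weight. An `α/2`-stable law at time `t` puts mass of order `t x^{-α/2}` around a point
`x ≳ t^{2/α}` and has negative moments that scale like powers of `t`, so subordination gives
`p_ζ^{(α)}(t, r, s) ≍ t (t^{1/α} + |r - s|)^{-1-α} (t^{1/α} + r + s)^{-2ζ}`.
For this expression the weight `((r + z) / (r + s + z))^{2ζ}` replaces the size `r + z` by `r + s`
in the last factor, and similarly for the other weight. With equal sizes the bound on the minimum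
comes from `|r - s| ≤ |r - z| + |z - s|`: one of the two distances is at least `|r - s| / 2`.
-/

open Asymptotics Topology
open scoped Nat

/-! ### Quotients of Gamma functions -/

theorem Gamma_nat_add_eq_prod {s : ℝ} (hs : 0 < s) (n : ℕ) :
    Gamma (n + s) = (∏ j ∈ Finset.range n, (s + j)) * Gamma s := by
  induction n with
  | zero => simp
  | succ n ih =>
    rw [Finset.prod_range_succ, Nat.cast_succ, add_right_comm, Gamma_add_one (by positivity), ih]
    ring

theorem Gamma_nat_add_isEquivalent {s : ℝ} (hs : 0 < s) :
    (fun n : ℕ => Gamma (n + s)) ~[atTop] fun n => (n : ℝ) ^ (s - 1) * n ! := by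
  have hΓ : Gamma s ≠ 0 := (Gamma_pos_of_pos hs).ne'
  have h := ((GammaSeq_tendsto_Gamma s).inv₀ hΓ).const_mul (Gamma s)
    |>.mul (tendsto_natCast_div_add_atTop s)
  rw [mul_inv_cancel₀ hΓ, one_mul] at h
  refine isEquivalent_of_tendsto_one (h.congr' ?_)
  filter_upwards [eventually_gt_atTop 0] with n hn
  have hn' : (0 : ℝ) < n := by exact_mod_cast hn
  have : 0 < ∏ j ∈ Finset.range n, (s + j) := Finset.prod_pos fun _ _ => by positivity
  simp only [Pi.div_apply, GammaSeq, Gamma_nat_add_eq_prod hs, Finset.prod_range_succ,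
    rpow_sub_one hn'.ne']
  field_simp
  ring

theorem Gamma_nat_add_div_isEquivalent {a b : ℝ} (ha : 0 < a) (hb : 0 < b) :
    (fun n : ℕ => Gamma (n + a) / Gamma (n + b)) ~[atTop] fun n => (n : ℝ) ^ (a - b) := by
  refine ((Gamma_nat_add_isEquivalent ha).div (Gamma_nat_add_isEquivalent hb)).congr_right ?_
  filter_upwards [eventually_gt_atTop 0] with n hn
  have hn' : (0 : ℝ) < n := by exact_mod_cast hn
  simp only [Pi.div_apply]
  rw [mul_div_mul_right _ _ (by positivity), ← rpow_sub hn']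
  ring_nf

theorem Gamma_nat_add_div_isTheta {a b m c : ℝ} (ha : 0 < a) (hb : 0 < b) (hm : 0 < m)
    (hc : 0 < c) :
    (fun n : ℕ => Gamma (n + a) / Gamma (n + b)) =Θ[⊤] fun n => (m * n + c) ^ (a - b) := by
  have hlinear : (fun n : ℕ => m * n + c) =Θ[atTop] fun n => (n : ℝ) :=
    ((isTheta_refl _ _).const_mul_left hm.ne').add_isLittleO
      ((isLittleO_const_id_atTop c).comp_tendsto tendsto_natCast_atTop_atTop)
  have h := (Gamma_nat_add_div_isEquivalent ha hb).isTheta.trans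
    (hlinear.symm.rpow (r := a - b) (.of_forall fun n => by positivity)
      (.of_forall fun n => by simp only [Pi.zero_apply]; positivity))
  exact ⟨h.1.nat_of_atTop (.of_forall fun n h0 => absurd h0 (by positivity)),
    h.2.nat_of_atTop (.of_forall fun n h0 => absurd h0 (by positivity))⟩

theorem isBigO_tsum_mul_of_isBigO {X ι : Type*} {S : Set X} {a : X → ι → ℝ} {w v : ι → ℝ}
    (ha : ∀ x ∈ S, ∀ i, 0 ≤ a x i) (hv : 0 ≤ v) (hs : ∀ x ∈ S, Summable fun i => a x i * v i)
    (hwv : w =O[⊤] v) :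
    (fun x => ∑' i, a x i * w i) =O[𝓟 S] fun x => ∑' i, a x i * v i := by
  obtain ⟨C, hC⟩ := isBigO_top.1 hwv
  refine isBigO_principal.2 ⟨C, fun x hx => ?_⟩
  have hterm : ∀ i, ‖a x i * w i‖ ≤ C * (a x i * v i) := fun i => by
    have h := hC i
    rw [norm_of_nonneg (hv i)] at h
    rw [norm_mul, norm_of_nonneg (ha x hx i), mul_left_comm]
    exact mul_le_mul_of_nonneg_left h (ha x hx i)
  rw [norm_of_nonneg (tsum_nonneg fun i => mul_nonneg (ha x hx i) (hv i)), ← tsum_mul_left]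
  exact tsum_of_norm_bounded ((hs x hx).mul_left C).hasSum hterm

/-! ### Growth of the Bessel function -/

theorem one_add_rpow_le {p u : ℝ} {n : ℕ} (hpn : p ≤ n) (hu : 0 ≤ u) :
    (1 + u) ^ p ≤ 2 ^ n * (1 + u ^ n) :=
  calc (1 + u) ^ p ≤ (1 + u) ^ (n : ℝ) := rpow_le_rpow_of_exponent_le (by linarith) hpn
    _ = (1 + u) ^ n := rpow_natCast _ _
    _ ≤ 2 ^ (n - 1) * (1 ^ n + u ^ n) := add_pow_le zero_le_one hu n
    _ ≤ 2 ^ n * (1 + u ^ n) := by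
      rw [one_pow]
      gcongr
      · exact one_le_two
      · exact n.sub_le 1

theorem pow_div_factorial_mul_div_pow_le {x : ℝ} (hx : 0 ≤ x) (j n : ℕ) :
    x ^ j / j ! * (x / (j + 1)) ^ n ≤ (n + 1) ^ n * (x ^ (j + n) / (j + n)!) := by
  have hfac : ((j + n)! : ℝ) ≤ j ! * (((n : ℝ) + 1) * (j + 1)) ^ n := by
    have h : (j + 1).ascFactorial n ≤ ((n + 1) * (j + 1)) ^ n :=
      (Nat.ascFactorial_le_pow_add j n).trans (Nat.pow_le_pow_left (by nlinarith) n)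
    rw [← Nat.factorial_mul_ascFactorial]
    exact_mod_cast Nat.mul_le_mul_left _ h
  calc x ^ j / j ! * (x / (j + 1)) ^ n
      = (n + 1) ^ n * (x ^ (j + n) / (j ! * (((n : ℝ) + 1) * (j + 1)) ^ n)) := by
        rw [div_pow, mul_pow]
        field_simp
        ring
    _ ≤ (n + 1) ^ n * (x ^ (j + n) / (j + n)!) := by gcongr

theorem pow_div_factorial_mul_rpow_neg_le {x p : ℝ} {n : ℕ} (hx : 0 ≤ x) (hp : 0 ≤ p)
    (hpn : p ≤ n) (j : ℕ) :
    x ^ j / j ! * ((j : ℝ) + 1) ^ (-p) ≤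
      (1 + x) ^ (-p) * (2 ^ n * (x ^ j / j ! + (n + 1) ^ n * (x ^ (j + n) / (j + n)!))) := by
  have hratio : ((j : ℝ) + 1) ^ (-p) = (1 + x) ^ (-p) * ((1 + x) / (j + 1)) ^ p := by
    rw [div_rpow (by positivity) (by positivity), rpow_neg (by positivity),
      rpow_neg (by positivity)]
    field_simp
  have hle : (1 + x) / (j + 1) ≤ 1 + x / ((j : ℝ) + 1) := by
    rw [add_div]
    gcongr
    exact (div_le_one (by positivity)).2 (le_add_of_nonneg_left j.cast_nonneg)
  calc x ^ j / j ! * ((j : ℝ) + 1) ^ (-p)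
      = (1 + x) ^ (-p) * (x ^ j / j ! * ((1 + x) / (j + 1)) ^ p) := by rw [hratio]; ring
    _ ≤ (1 + x) ^ (-p) * (x ^ j / j ! * (2 ^ n * (1 + (x / (j + 1)) ^ n))) := by
        gcongr
        exact (rpow_le_rpow (by positivity) hle hp).trans (one_add_rpow_le hpn (by positivity))
    _ = (1 + x) ^ (-p) * (2 ^ n * (x ^ j / j ! + x ^ j / j ! * (x / (j + 1)) ^ n)) := by ring
    _ ≤ _ := by
        gcongr _ * (_ * (_ + ?_))
        exact pow_div_factorial_mul_div_pow_le hx j n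

theorem summable_pow_div_factorial_mul_rpow_neg {x p : ℝ} (hx : 0 ≤ x) (hp : 0 ≤ p) :
    Summable fun j : ℕ => x ^ j / j ! * ((j : ℝ) + 1) ^ (-p) :=
  (Real.summable_pow_div_factorial x).of_nonneg_of_le (fun j => by positivity) fun j =>
    mul_le_of_le_one_right (by positivity) <|
      rpow_le_one_of_one_le_of_nonpos (le_add_of_nonneg_left j.cast_nonneg) (neg_nonpos.2 hp)

theorem tsum_pow_div_factorial_mul_rpow_neg_isBigO {p : ℝ} (hp : 0 ≤ p) :
    (fun x : ℝ => ∑' j : ℕ, x ^ j / j ! * ((j : ℝ) + 1) ^ (-p)) =O[𝓟 (Ici 0)]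
      fun x => (1 + x) ^ (-p) * exp x := by
  obtain ⟨n, hpn⟩ := exists_nat_ge p
  refine isBigO_principal.2 ⟨2 ^ n * (1 + (n + 1) ^ n), fun x (hx : 0 ≤ x) => ?_⟩
  have hexp : HasSum (fun j : ℕ => x ^ j / j !) (exp x) := by
    rw [exp_eq_exp_ℝ]
    exact NormedSpace.expSeries_div_hasSum_exp x
  have hshift : Summable fun j : ℕ => x ^ (j + n) / (j + n)! :=
    hexp.summable.comp_injective (add_left_injective n)
  have hshift_le : ∑' j : ℕ, x ^ (j + n) / (j + n)! ≤ exp x :=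
    (tsum_comp_le_tsum_of_inj hexp.summable (fun j => by positivity)
      (add_left_injective n)).trans_eq hexp.tsum_eq
  rw [norm_of_nonneg (tsum_nonneg fun j => by positivity), norm_of_nonneg (by positivity)]
  calc ∑' j : ℕ, x ^ j / j ! * ((j : ℝ) + 1) ^ (-p)
      ≤ (1 + x) ^ (-p) * (2 ^ n * (exp x + (n + 1) ^ n * ∑' j : ℕ, x ^ (j + n) / (j + n)!)) :=
        hasSum_le (pow_div_factorial_mul_rpow_neg_le hx hp hpn)
          (summable_pow_div_factorial_mul_rpow_neg hx hp).hasSum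
          (((hexp.add (hshift.hasSum.mul_left _)).mul_left _).mul_left _)
    _ ≤ (1 + x) ^ (-p) * (2 ^ n * (exp x + (n + 1) ^ n * exp x)) := by gcongr
    _ = 2 ^ n * (1 + (n + 1) ^ n) * ((1 + x) ^ (-p) * exp x) := by ring

theorem one_add_sub_mul_le_rpow_neg {p u : ℝ} (hp : 0 ≤ p) (hu : 0 < u) :
    1 + p - p * u ≤ u ^ (-p) := by
  have hlog : p * log u ≤ p * (u - 1) := by
    gcongr
    exact log_le_sub_one_of_pos hu
  rw [rpow_def_of_pos hu]
  linarith [add_one_le_exp (log u * -p)]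

theorem hasSum_pow_div_factorial_mul_two_mul_add_one (x : ℝ) :
    HasSum (fun k : ℕ => x ^ (2 * k) / (2 * k)! * (((2 * k : ℕ) : ℝ) + 1))
      (cosh x + x * sinh x) := by
  have hderiv : HasSum (fun k : ℕ => x ^ (2 * k) / (2 * k)! * ((2 * k : ℕ) : ℝ))
      (x * sinh x) := by
    rw [← hasSum_nat_add_iff' 1]
    simp only [Finset.range_one, Finset.sum_singleton, mul_zero, Nat.cast_zero, sub_zero]
    refine ((hasSum_sinh x).mul_left x).congr_fun fun k => ?_
    rw [mul_add_one, Nat.factorial_succ]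
    push_cast
    field_simp
    ring
  refine ((hasSum_cosh x).add hderiv).congr_fun fun k => ?_
  ring

-- This is Jensen for the convex function `u ↦ u ^ (-p)`, via its tangent line at `1 + x`.
theorem one_add_rpow_neg_mul_cosh_le_tsum {p x : ℝ} (hp : 0 ≤ p) (hx : 0 ≤ x) :
    (1 + x) ^ (-p) * cosh x ≤
      ∑' k : ℕ, x ^ (2 * k) / (2 * k)! * (((2 * k : ℕ) : ℝ) + 1) ^ (-p) := by
  set a : ℕ → ℝ := fun k => x ^ (2 * k) / (2 * k)!
  set m : ℕ → ℝ := fun k => ((2 * k : ℕ) : ℝ) + 1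
  have htangent (k : ℕ) :
      (1 + x) ^ (-p) * ((1 + p) * a k - p / (1 + x) * (a k * m k)) ≤ a k * m k ^ (-p) :=
    calc (1 + x) ^ (-p) * ((1 + p) * a k - p / (1 + x) * (a k * m k))
        = a k * ((1 + x) ^ (-p) * (1 + p - p * (m k / (1 + x)))) := by ring
      _ ≤ a k * ((1 + x) ^ (-p) * (m k / (1 + x)) ^ (-p)) := by
        gcongr
        exact one_add_sub_mul_le_rpow_neg hp (by positivity)
      _ = a k * m k ^ (-p) := by
        rw [← mul_rpow (by positivity) (by positivity), mul_div_cancel₀ _ (by positivity)]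
  have hmean : p / (1 + x) * (cosh x + x * sinh x) ≤ p * cosh x := by
    rw [div_mul_eq_mul_div, div_le_iff₀ (by positivity), mul_assoc]
    gcongr
    nlinarith [sinh_lt_cosh x]
  calc (1 + x) ^ (-p) * cosh x
      ≤ (1 + x) ^ (-p) * ((1 + p) * cosh x - p / (1 + x) * (cosh x + x * sinh x)) := by
        gcongr
        linarith
    _ ≤ ∑' k, a k * m k ^ (-p) :=
        hasSum_le htangent
          ((((hasSum_cosh x).mul_left _).sub
            ((hasSum_pow_div_factorial_mul_two_mul_add_one x).mul_left _)).mul_left _)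
          ((summable_pow_div_factorial_mul_rpow_neg hx hp).comp_injective
            (mul_right_injective₀ two_ne_zero)).hasSum

theorem tsum_even_pow_div_factorial_mul_rpow_neg_isTheta {p : ℝ} (hp : 0 ≤ p) :
    (fun x : ℝ => ∑' k : ℕ, x ^ (2 * k) / (2 * k)! * (((2 * k : ℕ) : ℝ) + 1) ^ (-p))
      =Θ[𝓟 (Ici 0)] fun x => (1 + x) ^ (-p) * exp x := by
  constructor
  · refine .trans (isBigO_principal.2 ⟨1, fun x (hx : 0 ≤ x) => ?_⟩)
      (tsum_pow_div_factorial_mul_rpow_neg_isBigO hp)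
    rw [one_mul, norm_of_nonneg (tsum_nonneg fun k => by positivity),
      norm_of_nonneg (tsum_nonneg fun j => by positivity)]
    exact tsum_comp_le_tsum_of_inj (summable_pow_div_factorial_mul_rpow_neg hx hp)
      (fun j => by positivity) (mul_right_injective₀ two_ne_zero)
  · refine isBigO_principal.2 ⟨2, fun x (hx : 0 ≤ x) => ?_⟩
    rw [norm_of_nonneg (by positivity), norm_of_nonneg (tsum_nonneg fun k => by positivity)]
    have hcosh : exp x ≤ 2 * cosh x := by
      rw [cosh_eq]
      linarith [exp_pos (-x)]
    calc (1 + x) ^ (-p) * exp x ≤ (1 + x) ^ (-p) * (2 * cosh x) := by gcongr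
      _ = 2 * ((1 + x) ^ (-p) * cosh x) := by ring
      _ ≤ _ := by
        gcongr
        exact one_add_rpow_neg_mul_cosh_le_tsum hp hx

theorem exists_bounds_of_isTheta_principal {X : Type*} {S : Set X} {f g : X → ℝ}
    (hf : ∀ x ∈ S, 0 ≤ f x) (hg : ∀ x ∈ S, 0 ≤ g x) (h : f =Θ[𝓟 S] g) :
    ∃ c C : ℝ, 0 < c ∧ 0 < C ∧ ∀ x ∈ S, c * g x ≤ f x ∧ f x ≤ C * g x := by
  obtain ⟨C, hC, hfg⟩ := h.1.exists_pos
  obtain ⟨c, hc, hgf⟩ := h.2.exists_pos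
  refine ⟨c⁻¹, C, inv_pos.2 hc, hC, fun x hx => ?_⟩
  have hup := isBigOWith_principal.1 hfg x hx
  have hlow := isBigOWith_principal.1 hgf x hx
  rw [norm_of_nonneg (hf x hx), norm_of_nonneg (hg x hx)] at hup hlow
  exact ⟨(inv_mul_le_iff₀ hc).2 hlow, hup⟩

-- The duplication formula turns `4 ^ k * k !` into `(2 * k)!`.
theorem besselI_eq_mul_tsum (ζ : ℝ) {x : ℝ} (hx : 0 < x) :
    besselI (ζ - 1 / 2) x = (2 ^ (ζ - 1 / 2) * √π)⁻¹ * (x ^ (ζ - 1 / 2) *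
      ∑' k : ℕ, x ^ (2 * k) / (2 * k)! * (Gamma (k + 1 / 2) / Gamma (k + (1 / 2 + ζ)))) := by
  rw [besselI, ← tsum_mul_left, ← tsum_mul_left]
  refine tsum_congr fun k => ?_
  have hdup := Gamma_mul_Gamma_add_half ((k : ℝ) + 1 / 2)
  rw [show (k : ℝ) + 1 / 2 + 1 / 2 = k + 1 by ring,
    show 2 * ((k : ℝ) + 1 / 2) = ((2 * k : ℕ) : ℝ) + 1 by push_cast; ring, Gamma_nat_eq_factorial,
    Gamma_nat_eq_factorial, sub_add_cancel_right, rpow_neg zero_le_two, rpow_natCast] at hdup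
  have hGamma : Gamma (k + 1 / 2) = (2 * k)! * (2 ^ (2 * k))⁻¹ * √π / k ! :=
    (eq_div_iff (by positivity)).2 hdup
  have hpow : (x / 2) ^ (2 * (k : ℝ) + (ζ - 1 / 2)) =
      x ^ (2 * k) / 2 ^ (2 * k) * (x ^ (ζ - 1 / 2) / 2 ^ (ζ - 1 / 2)) := by
    rw [← div_rpow hx.le zero_le_two, rpow_add (by positivity),
      show 2 * (k : ℝ) = ((2 * k : ℕ) : ℝ) by push_cast; rfl, rpow_natCast, div_pow]
  rw [hpow, hGamma, show (k : ℝ) + (ζ - 1 / 2) + 1 = k + (1 / 2 + ζ) by ring]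
  have hπ : √π ≠ 0 := by positivity
  field_simp

theorem tsum_even_pow_div_factorial_mul_Gamma_div_isTheta {ζ : ℝ} (hζ : 0 ≤ ζ) :
    (fun x : ℝ => ∑' k : ℕ,
        x ^ (2 * k) / (2 * k)! * (Gamma (k + 1 / 2) / Gamma (k + (1 / 2 + ζ))))
      =Θ[𝓟 (Ici 0)] fun x => (1 + x) ^ (-ζ) * exp x := by
  have hratio : (fun k : ℕ => Gamma (k + 1 / 2) / Gamma (k + (1 / 2 + ζ))) =Θ[⊤]
      fun k => (((2 * k : ℕ) : ℝ) + 1) ^ (-ζ) := by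
    simpa using Gamma_nat_add_div_isTheta one_half_pos (show 0 < 1 / 2 + ζ by positivity)
      two_pos one_pos
  have ha : ∀ x ∈ Ici (0 : ℝ), ∀ k : ℕ, 0 ≤ x ^ (2 * k) / (2 * k)! := fun x hx k => by
    have hx : 0 ≤ x := hx
    positivity
  have hs : ∀ x ∈ Ici (0 : ℝ), Summable fun k : ℕ =>
      x ^ (2 * k) / (2 * k)! * (((2 * k : ℕ) : ℝ) + 1) ^ (-ζ) := fun x hx =>
    (summable_pow_div_factorial_mul_rpow_neg hx hζ).comp_injective
      (mul_right_injective₀ two_ne_zero)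
  have hs' : ∀ x ∈ Ici (0 : ℝ), Summable fun k : ℕ =>
      x ^ (2 * k) / (2 * k)! * (Gamma (k + 1 / 2) / Gamma (k + (1 / 2 + ζ))) := fun x hx =>
    summable_of_isBigO (hs x hx) ((isBigO_refl _ _).mul (hratio.1.mono le_top))
  refine .trans ⟨?_, ?_⟩ (tsum_even_pow_div_factorial_mul_rpow_neg_isTheta hζ)
  · exact isBigO_tsum_mul_of_isBigO ha (fun k => rpow_nonneg (by positivity) _) hs hratio.1
  · exact isBigO_tsum_mul_of_isBigO ha (fun k => div_nonneg (by positivity) (by positivity)) hs'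
      hratio.2

theorem besselI_isTheta {ζ : ℝ} (hζ : 0 ≤ ζ) :
    besselI (ζ - 1 / 2) =Θ[𝓟 (Ioi 0)] fun x => x ^ (ζ - 1 / 2) * ((1 + x) ^ (-ζ) * exp x) := by
  have hseries := (tsum_even_pow_div_factorial_mul_Gamma_div_isTheta hζ).mono
    (principal_mono.2 Ioi_subset_Ici_self)
  have heq : besselI (ζ - 1 / 2) =ᶠ[𝓟 (Ioi 0)] _ :=
    eventually_principal.2 fun x => besselI_eq_mul_tsum ζ
  exact heq.isTheta.trans (((isTheta_refl _ _).mul hseries).const_mul_left (by positivity))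

theorem besselI_nonneg {ζ x : ℝ} (hζ : 0 ≤ ζ) (hx : 0 < x) : 0 ≤ besselI (ζ - 1 / 2) x := by
  rw [besselI_eq_mul_tsum ζ hx]
  exact mul_nonneg (by positivity)
    (mul_nonneg (by positivity) (tsum_nonneg fun k => by positivity))

/-- The Gaussian expression comparable to the Bessel heat kernel: `besselHeat` with the Bessel
function `I_{ζ-1/2}(x)` replaced by `x ^ (ζ - 1/2) (1 + x) ^ (-ζ) exp x`. -/
noncomputable def heatProfile (ζ r s τ : ℝ) : ℝ :=
  (2 * τ) ^ (-(1 / 2) : ℝ) * (2 * τ + r * s) ^ (-ζ) * exp (-(r - s) ^ 2 / (4 * τ))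

theorem heatProfile_eq (ζ : ℝ) {r s τ : ℝ} (hr : 0 < r) (hs : 0 < s) (hτ : 0 < τ) :
    (r * s) ^ ((1 : ℝ) / 2 - ζ) / (2 * τ) * exp (-(r ^ 2 + s ^ 2) / (4 * τ)) *
      ((r * s / (2 * τ)) ^ (ζ - 1 / 2) *
        ((1 + r * s / (2 * τ)) ^ (-ζ) * exp (r * s / (2 * τ)))) = heatProfile ζ r s τ := by
  have hexp : exp (-(r - s) ^ 2 / (4 * τ)) =
      exp (-(r ^ 2 + s ^ 2) / (4 * τ)) * exp (r * s / (2 * τ)) := by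
    rw [← exp_add]
    congr 1
    field_simp
    ring
  rw [heatProfile, hexp]
  have hq : 0 < r * s := by positivity
  have hT : 0 < 2 * τ := by positivity
  generalize r * s = q at hq ⊢
  generalize 2 * τ = T at hT ⊢
  have hq1 : q ^ ((1 : ℝ) / 2 - ζ) * q ^ (ζ - 1 / 2) = 1 := by
    rw [← rpow_add hq, sub_add_sub_cancel, sub_self, rpow_zero]
  have hT1 : T⁻¹ * (T ^ (ζ - 1 / 2))⁻¹ * (T ^ (-ζ))⁻¹ = T ^ (-(1 / 2) : ℝ) := by
    rw [← rpow_neg_one T, ← rpow_neg hT.le, ← rpow_neg hT.le, ← rpow_add hT, ← rpow_add hT]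
    ring_nf
  rw [div_rpow hq.le hT.le, one_add_div hT.ne', div_rpow (by positivity) hT.le, ← hT1]
  linear_combination (exp (-(r ^ 2 + s ^ 2) / (4 * τ)) * T⁻¹ * (T ^ (ζ - 1 / 2))⁻¹ *
    (T ^ (-ζ))⁻¹ * (T + q) ^ (-ζ) * exp (q / T)) * hq1

theorem besselHeat_bounds {ζ : ℝ} (hζ : 0 ≤ ζ) :
    ∃ c C : ℝ, 0 < c ∧ 0 < C ∧ ∀ τ r s : ℝ, 0 < τ → 0 < r → 0 < s →
      c * heatProfile ζ r s τ ≤ besselHeat ζ τ r s ∧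
      besselHeat ζ τ r s ≤ C * heatProfile ζ r s τ := by
  obtain ⟨c, C, hc, hC, h⟩ := exists_bounds_of_isTheta_principal (fun x => besselI_nonneg hζ)
    (fun x (hx : 0 < x) => by positivity) (besselI_isTheta hζ)
  refine ⟨c, C, hc, hC, fun τ r s hτ hr hs => ?_⟩
  obtain ⟨hlow, hup⟩ := h (r * s / (2 * τ)) (show 0 < r * s / (2 * τ) by positivity)
  rw [← heatProfile_eq ζ hr hs hτ, besselHeat, mul_left_comm c, mul_left_comm C]
  constructor <;> gcongr

/-! ### Stable laws -/

theorem min_one_div_two_le_one_sub_exp_neg {u : ℝ} (hu : 0 ≤ u) :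
    min 1 u / 2 ≤ 1 - exp (-u) := by
  have hexp : exp (-u) ≤ (1 + u)⁻¹ := by
    rw [exp_neg]
    exact inv_anti₀ (by positivity) (by linarith [add_one_le_exp u])
  have hinv : (1 + u)⁻¹ ≤ 1 - min 1 u / 2 := by
    rw [inv_le_iff_one_le_mul₀ (by positivity)]
    rcases le_total u 1 with h | h
    · rw [min_eq_right h]
      nlinarith
    · rw [min_eq_left h]
      linarith
  linarith

theorem exists_rpow_eq_mul_self {β K : ℝ} (hβ : β < 1) (hK : 1 ≤ K) :
    ∃ ε : ℝ, 0 < ε ∧ ε ≤ 1 ∧ ε ^ β = K * ε := by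
  have hβ' : 0 < 1 - β := sub_pos.2 hβ
  have hε : 0 < K ^ (-(1 - β)⁻¹) := rpow_pos_of_pos (by linarith) _
  refine ⟨K ^ (-(1 - β)⁻¹), hε, rpow_le_one_of_one_le_of_nonpos hK (by simp [hβ'.le]), ?_⟩
  have h : (K ^ (-(1 - β)⁻¹)) ^ (1 - β) = K⁻¹ := by
    rw [← rpow_mul (by linarith), neg_mul, inv_mul_cancel₀ hβ'.ne', rpow_neg_one]
  rw [rpow_sub hε, rpow_one, div_eq_iff (by positivity)] at h
  exact ((eq_inv_mul_iff_mul_eq₀ (by positivity)).1 h).symm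

theorem ofReal_Gamma_mul_rpow_neg {a τ : ℝ} (ha : 0 < a) (hτ : 0 < τ) :
    ENNReal.ofReal (Gamma a * τ ^ (-a)) =
      ∫⁻ l in Ioi (0 : ℝ), ENNReal.ofReal (l ^ (a - 1) * exp (-τ * l)) := by
  have hint : IntegrableOn (fun l : ℝ => l ^ (a - 1) * exp (-τ * l)) (Ioi 0) := by
    simpa using integrableOn_rpow_mul_exp_neg_mul_rpow (s := a - 1) (by linarith) one_pos hτ
  have hnonneg : 0 ≤ᵐ[volume.restrict (Ioi 0)] fun l : ℝ => l ^ (a - 1) * exp (-τ * l) := by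
    filter_upwards [ae_restrict_mem measurableSet_Ioi] with l (hl : 0 < l)
    positivity
  rw [← ofReal_integral_eq_lintegral_ofReal hint hnonneg]
  simp only [neg_mul]
  rw [integral_rpow_mul_exp_neg_mul_Ioi ha hτ, one_div, inv_rpow hτ.le, rpow_neg hτ.le, mul_comm]

/-- `μ` is the law at time `t` of a `β`-stable subordinator: a probability measure on `(0, ∞)`
with Laplace transform `l ↦ exp (-t l ^ β)`. -/
structure IsStableLaw (β t : ℝ) (μ : Measure ℝ) : Prop extends IsProbabilityMeasure μ where
  ae_pos : ∀ᵐ τ ∂μ, 0 < τ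
  integral_exp : ∀ l, 0 ≤ l → ∫ τ, exp (-τ * l) ∂μ = exp (-t * l ^ β)

namespace IsStableLaw

variable {β t : ℝ} {μ : Measure ℝ}

theorem integrable_exp (h : IsStableLaw β t μ) {l : ℝ} (hl : 0 ≤ l) :
    Integrable (fun τ => exp (-τ * l)) μ := by
  have := h.toIsProbabilityMeasure
  refine .of_bound (by fun_prop) 1 ?_
  filter_upwards [h.ae_pos] with τ hτ
  rw [norm_of_nonneg (exp_pos _).le, exp_le_one_iff]
  nlinarith

theorem integrable_one_sub_exp (h : IsStableLaw β t μ) {l : ℝ} (hl : 0 ≤ l) :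
    Integrable (fun τ => 1 - exp (-τ * l)) μ := by
  have := h.toIsProbabilityMeasure
  exact (integrable_const 1).sub (h.integrable_exp hl)

theorem integral_one_sub_exp (h : IsStableLaw β t μ) {l : ℝ} (hl : 0 ≤ l) :
    ∫ τ, (1 - exp (-τ * l)) ∂μ = 1 - exp (-t * l ^ β) := by
  have := h.toIsProbabilityMeasure
  rw [integral_sub (integrable_const 1) (h.integrable_exp hl), h.integral_exp l hl]
  simp

theorem integrable_min_one_div (h : IsStableLaw β t μ) {x : ℝ} (hx : 0 < x) :
    Integrable (fun τ => min 1 (τ / x)) μ := by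
  have := h.toIsProbabilityMeasure
  refine .of_bound (by fun_prop) 1 ?_
  filter_upwards [h.ae_pos] with τ hτ
  rw [norm_of_nonneg (by positivity)]
  exact min_le_left _ _

theorem integral_min_one_div_le (h : IsStableLaw β t μ) {x : ℝ} (hx : 0 < x) :
    ∫ τ, min 1 (τ / x) ∂μ ≤ 2 * (t * x ^ (-β)) :=
  calc ∫ τ, min 1 (τ / x) ∂μ ≤ ∫ τ, 2 * (1 - exp (-τ * x⁻¹)) ∂μ := by
        refine integral_mono_ae (h.integrable_min_one_div hx)
          ((h.integrable_one_sub_exp (by positivity)).const_mul 2) ?_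
        filter_upwards [h.ae_pos] with τ hτ
        have := min_one_div_two_le_one_sub_exp_neg (u := τ / x) (by positivity)
        rw [neg_mul, ← div_eq_mul_inv]
        linarith
    _ = 2 * (1 - exp (-(t * x ^ (-β)))) := by
        rw [integral_const_mul, h.integral_one_sub_exp (by positivity), inv_rpow hx.le,
          ← rpow_neg hx.le, neg_mul]
    _ ≤ 2 * (t * x ^ (-β)) := by linarith [add_one_le_exp (-(t * x ^ (-β)))]

theorem measureReal_Ioi_le (h : IsStableLaw β t μ) {x : ℝ} (hx : 0 < x) :
    μ.real (Ioi x) ≤ 2 * (t * x ^ (-β)) := by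
  have := h.toIsProbabilityMeasure
  have hnonneg : 0 ≤ᵐ[μ] fun τ => min 1 (τ / x) := by
    filter_upwards [h.ae_pos] with τ hτ
    simp only [Pi.zero_apply]
    positivity
  calc μ.real (Ioi x) ≤ μ.real {τ | 1 ≤ min 1 (τ / x)} :=
        measureReal_mono fun τ hτ => le_min le_rfl ((one_le_div hx).2 (mem_Ioi.1 hτ).le)
    _ ≤ ∫ τ, min 1 (τ / x) ∂μ := by
        simpa using mul_meas_ge_le_integral_of_nonneg hnonneg (h.integrable_min_one_div hx) 1
    _ ≤ 2 * (t * x ^ (-β)) := h.integral_min_one_div_le hx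

theorem one_sub_exp_le_measureReal_Ioi_add (h : IsStableLaw β t μ) {ε x : ℝ} (hε : 0 ≤ ε)
    (hx : 0 < x) :
    1 - exp (-(t * x ^ (-β) * ε ^ β)) ≤ μ.real (Ioi x) + ε * (2 * (t * x ^ (-β))) := by
  have := h.toIsProbabilityMeasure
  have hind : Integrable ((Ioi x).indicator (1 : ℝ → ℝ)) μ :=
    (integrable_const 1).indicator measurableSet_Ioi
  have hmin := (h.integrable_min_one_div hx).const_mul ε
  calc 1 - exp (-(t * x ^ (-β) * ε ^ β)) = ∫ τ, (1 - exp (-τ * (ε / x))) ∂μ := by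
        rw [h.integral_one_sub_exp (by positivity), div_rpow hε hx.le, rpow_neg hx.le]
        ring_nf
    _ ≤ ∫ τ, ((Ioi x).indicator 1 τ + ε * min 1 (τ / x)) ∂μ := by
        refine integral_mono_ae (h.integrable_one_sub_exp (by positivity)) (hind.add hmin) ?_
        filter_upwards [h.ae_pos] with τ hτ
        rcases lt_or_ge x τ with hxτ | hxτ
        · rw [indicator_of_mem (mem_Ioi.2 hxτ), Pi.one_apply]
          have : 0 ≤ ε * min 1 (τ / x) := by positivity
          linarith [exp_pos (-τ * (ε / x))]
        · rw [indicator_of_notMem (notMem_Ioi.2 hxτ), min_eq_right ((div_le_one hx).2 hxτ)]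
          linarith [add_one_le_exp (-τ * (ε / x)), mul_div_left_comm ε τ x]
    _ = μ.real (Ioi x) + ε * ∫ τ, min 1 (τ / x) ∂μ := by
        rw [integral_add hind hmin, integral_indicator_one measurableSet_Ioi, integral_const_mul]
    _ ≤ μ.real (Ioi x) + ε * (2 * (t * x ^ (-β))) := by
        gcongr
        exact h.integral_min_one_div_le hx

theorem exists_le_measureReal_Ioi (hβ : 0 ≤ β) (hβ1 : β < 1) :
    ∃ c : ℝ, 0 < c ∧ ∀ (t x : ℝ) (μ : Measure ℝ), IsStableLaw β t μ → 0 ≤ t → 0 < x →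
      t * x ^ (-β) ≤ 1 → c * (t * x ^ (-β)) ≤ μ.real (Ioi x) := by
  obtain ⟨ε, hε, hε1, hεβ⟩ := exists_rpow_eq_mul_self hβ1 (by norm_num : (1 : ℝ) ≤ 8)
  refine ⟨2 * ε, by positivity, fun t x μ h ht hx htx => ?_⟩
  have hlow := min_one_div_two_le_one_sub_exp_neg (u := t * x ^ (-β) * ε ^ β) (by positivity)
  rw [min_eq_right (mul_le_one₀ htx (by positivity) (rpow_le_one hε.le hε1 hβ))] at hlow
  have hup := h.one_sub_exp_le_measureReal_Ioi_add hε.le hx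
  rw [hεβ] at hlow hup
  linarith

theorem exists_le_measureReal_Ioc (hβ : 0 < β) (hβ1 : β < 1) :
    ∃ c B : ℝ, 0 < c ∧ 0 < B ∧ ∀ (t x : ℝ) (μ : Measure ℝ), IsStableLaw β t μ → 0 ≤ t →
      0 < x → t * x ^ (-β) ≤ 1 → c * (t * x ^ (-β)) ≤ μ.real (Ioc x (B * x)) := by
  obtain ⟨c, hc, h⟩ := exists_le_measureReal_Ioi hβ.le hβ1
  refine ⟨c / 2, (c / 4) ^ (-β⁻¹), by positivity, by positivity, fun t x μ hμ ht hx htx => ?_⟩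
  have := hμ.toIsProbabilityMeasure
  have hB : 0 < (c / 4) ^ (-β⁻¹) := by positivity
  have hBβ : ((c / 4) ^ (-β⁻¹)) ^ (-β) = c / 4 := by
    rw [← rpow_mul (by positivity), neg_mul_neg, inv_mul_cancel₀ hβ.ne', rpow_one]
  generalize (c / 4) ^ (-β⁻¹) = B at hB hBβ ⊢
  have htail := hμ.measureReal_Ioi_le (x := B * x) (by positivity)
  rw [mul_rpow hB.le hx.le, hBβ] at htail
  have hsplit : μ.real (Ioi x) ≤ μ.real (Ioc x (B * x)) + μ.real (Ioi (B * x)) :=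
    (measureReal_mono Ioi_subset_Ioc_union_Ioi).trans (measureReal_union_le _ _)
  linarith [h t x μ hμ ht hx htx]

theorem lintegral_Gamma_mul_rpow_neg (h : IsStableLaw β t μ) (hβ : 0 < β) (ht : 0 < t) {a : ℝ}
    (ha : 0 < a) :
    ∫⁻ τ, ENNReal.ofReal (Gamma a * τ ^ (-a)) ∂μ =
      ENNReal.ofReal (t ^ (-a / β) * (1 / β) * Gamma (a / β)) := by
  have := h.toIsProbabilityMeasure
  calc ∫⁻ τ, ENNReal.ofReal (Gamma a * τ ^ (-a)) ∂μ
      = ∫⁻ τ, (∫⁻ l in Ioi (0 : ℝ), ENNReal.ofReal (l ^ (a - 1) * exp (-τ * l))) ∂μ := by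
        refine lintegral_congr_ae ?_
        filter_upwards [h.ae_pos] with τ hτ
        exact ofReal_Gamma_mul_rpow_neg ha hτ
    _ = ∫⁻ l in Ioi (0 : ℝ), ∫⁻ τ, ENNReal.ofReal (l ^ (a - 1) * exp (-τ * l)) ∂μ :=
        lintegral_lintegral_swap (by fun_prop)
    _ = ∫⁻ l in Ioi (0 : ℝ), ENNReal.ofReal (l ^ (a - 1) * exp (-t * l ^ β)) := by
        refine setLIntegral_congr_fun measurableSet_Ioi fun l (hl : 0 < l) => ?_
        rw [← ofReal_integral_eq_lintegral_ofReal ((h.integrable_exp hl.le).const_mul _)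
          (.of_forall fun τ => by positivity), integral_const_mul, h.integral_exp l hl.le]
    _ = ENNReal.ofReal (t ^ (-a / β) * (1 / β) * Gamma (a / β)) := by
        rw [← ofReal_integral_eq_lintegral_ofReal
          (integrableOn_rpow_mul_exp_neg_mul_rpow (by linarith) hβ ht),
          integral_rpow_mul_exp_neg_mul_rpow hβ (by linarith) ht, sub_add_cancel]
        filter_upwards [ae_restrict_mem measurableSet_Ioi] with l (hl : 0 < l)
        positivity

theorem integrable_rpow_neg (h : IsStableLaw β t μ) (hβ : 0 < β) (ht : 0 < t) {a : ℝ}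
    (ha : 0 < a) : Integrable (fun τ => τ ^ (-a)) μ := by
  have hΓ : Gamma a ≠ 0 := (Gamma_pos_of_pos ha).ne'
  have hnonneg : 0 ≤ᵐ[μ] fun τ => Gamma a * τ ^ (-a) := by
    filter_upwards [h.ae_pos] with τ hτ
    positivity
  refine (integrable_const_mul_iff hΓ.isUnit _).1 ⟨by fun_prop, ?_⟩
  rw [hasFiniteIntegral_iff_ofReal hnonneg, h.lintegral_Gamma_mul_rpow_neg hβ ht ha]
  exact ENNReal.ofReal_lt_top

theorem integral_rpow_neg (h : IsStableLaw β t μ) (hβ : 0 < β) (ht : 0 < t) {a : ℝ}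
    (ha : 0 < a) : ∫ τ, τ ^ (-a) ∂μ = t ^ (-a / β) * (1 / β) * Gamma (a / β) / Gamma a := by
  have hnonneg : 0 ≤ᵐ[μ] fun τ => Gamma a * τ ^ (-a) := by
    filter_upwards [h.ae_pos] with τ hτ
    positivity
  rw [eq_div_iff (Gamma_pos_of_pos ha).ne', mul_comm, ← integral_const_mul,
    integral_eq_lintegral_of_nonneg_ae hnonneg (by fun_prop),
    h.lintegral_Gamma_mul_rpow_neg hβ ht ha, ENNReal.toReal_ofReal]
  positivity

end IsStableLaw

/-! ### Averaging the heat profile over a stable law -/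

theorem rpow_neg_le_mul_rpow_neg {x y K p : ℝ} (hx : 0 < x) (hK : 0 ≤ K) (hxy : x ≤ K * y)
    (hp : 0 ≤ p) : y ^ (-p) ≤ K ^ p * x ^ (-p) := by
  have hKy : 0 < K * y := hx.trans_le hxy
  have hK' : 0 < K := hK.lt_of_ne' (left_ne_zero_of_mul hKy.ne')
  have hy : 0 < y := pos_of_mul_pos_right hKy hK
  calc y ^ (-p) = K ^ p * (K * y) ^ (-p) := by
        rw [mul_rpow hK hy.le, rpow_neg hK, mul_inv_cancel_left₀ (by positivity)]
    _ ≤ K ^ p * x ^ (-p) := by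
        gcongr K ^ p * ?_
        exact rpow_le_rpow_of_nonpos hx hxy (neg_nonpos.2 hp)

theorem sq_rpow_neg {y : ℝ} (hy : 0 ≤ y) (p : ℝ) : (y ^ 2) ^ (-p) = y ^ (-(2 * p)) := by
  rw [← rpow_natCast, ← rpow_mul hy]
  push_cast
  ring_nf

theorem sq_rpow_neg_half {y : ℝ} (hy : 0 ≤ y) : (y ^ 2) ^ (-(1 / 2) : ℝ) = y⁻¹ := by
  rw [sq_rpow_neg hy, mul_one_div_cancel two_ne_zero, rpow_neg_one]

theorem rpow_le_mul_exp {q b x : ℝ} (hq : 0 < q) (hb : 0 < b) (hx : 0 ≤ x) :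
    x ^ q ≤ (q / b) ^ q * exp (b * x) :=
  calc x ^ q = (q / b) ^ q * (b * x / q) ^ q := by
        rw [← mul_rpow (by positivity) (by positivity)]
        congr 1
        field_simp
    _ ≤ (q / b) ^ q * exp (b * x / q) ^ q := by
        gcongr
        linarith [add_one_le_exp (b * x / q)]
    _ = (q / b) ^ q * exp (b * x) := by
        rw [← exp_mul, div_mul_cancel₀ _ hq.ne']

theorem min_one_rpow_neg_le {v p : ℝ} (hv : 0 < v) : (min 1 v) ^ (-p) ≤ 1 + v ^ (-p) := by
  have hvp : 0 < v ^ (-p) := by positivity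
  rcases min_choice 1 v with h | h <;> rw [h]
  · rw [one_rpow]
    linarith
  · linarith

theorem exp_neg_mul_min_one_rpow_neg_le {v p : ℝ} (hv : 0 < v) (hp : 0 ≤ p) :
    (min 1 v) ^ (-p) * exp (-(1 / (4 * v))) ≤
      exp (1 / 4) * (4 * (p + 1)) ^ (p + 1) * min 1 v := by
  set m := min 1 v with hm_def
  have hm : 0 < m := by positivity
  have hinv : m⁻¹ ≤ 1 + v⁻¹ := by
    simpa [rpow_neg_one, hm_def] using min_one_rpow_neg_le (p := 1) hv
  have hexp : exp (-(1 / (4 * v))) ≤ exp (1 / 4) * exp (-(1 / 4 * m⁻¹)) := by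
    rw [← exp_add, exp_le_exp, one_div, mul_inv]
    linarith
  have hpow := rpow_le_mul_exp (q := p + 1) (b := 1 / 4) (x := m⁻¹) (by positivity)
    (by norm_num) (by positivity)
  calc m ^ (-p) * exp (-(1 / (4 * v)))
      ≤ m ^ (-p) * (exp (1 / 4) * exp (-(1 / 4 * m⁻¹))) := by gcongr
    _ = exp (1 / 4) * exp (-(1 / 4 * m⁻¹)) * (m⁻¹ ^ (p + 1) * m) := by
        rw [inv_rpow hm.le, rpow_add_one hm.ne', rpow_neg hm.le]
        field_simp
    _ ≤ exp (1 / 4) * exp (-(1 / 4 * m⁻¹)) *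
          (((p + 1) / (1 / 4)) ^ (p + 1) * exp (1 / 4 * m⁻¹) * m) := by gcongr
    _ = exp (1 / 4) * (4 * (p + 1)) ^ (p + 1) * m := by
        rw [exp_neg, show (p + 1) / (1 / 4) = 4 * (p + 1) by ring]
        field_simp

theorem measurable_heatProfile (ζ r s : ℝ) : Measurable (heatProfile ζ r s) := by
  unfold heatProfile
  fun_prop

section heatProfile

variable {ζ r s τ X : ℝ}

theorem heatProfile_nonneg (hrs : 0 ≤ r * s) (hτ : 0 ≤ τ) : 0 ≤ heatProfile ζ r s τ := by
  unfold heatProfile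
  positivity

theorem heatProfile_le_of_scale (hζ : 0 ≤ ζ) (hrs : 0 ≤ r * s) (hτ : 0 < τ) (hX : 0 < X) :
    heatProfile ζ r s τ ≤ X⁻¹ * (X ^ 2 + r * s) ^ (-ζ) *
      ((min 1 (τ / X ^ 2)) ^ (-(1 / 2 + ζ)) * exp (-(r - s) ^ 2 / (4 * τ))) := by
  set m := min 1 (τ / X ^ 2)
  have hm : 0 < m := by positivity
  have hmX : m * X ^ 2 ≤ 2 * τ := by
    have := (le_div_iff₀ (by positivity)).1 (min_le_right 1 (τ / X ^ 2))
    linarith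
  have hmrs : m * (r * s) ≤ r * s := mul_le_of_le_one_left hrs (min_le_left _ _)
  calc heatProfile ζ r s τ
      ≤ (m * X ^ 2) ^ (-(1 / 2) : ℝ) * (m * (X ^ 2 + r * s)) ^ (-ζ) *
          exp (-(r - s) ^ 2 / (4 * τ)) := by
        unfold heatProfile
        gcongr ?_ * ?_ * _
        · exact rpow_le_rpow_of_nonpos (by positivity) hmX (by norm_num)
        · exact rpow_le_rpow_of_nonpos (by positivity) (by linarith) (by linarith)
    _ = _ := by
        rw [mul_rpow hm.le (by positivity), mul_rpow hm.le (by positivity),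
          sq_rpow_neg_half hX.le, neg_add, rpow_add hm]
        ring

theorem heatProfile_le_one_add_rpow_neg (hζ : 0 ≤ ζ) (hrs : 0 ≤ r * s) (hτ : 0 < τ)
    (hX : 0 < X) :
    heatProfile ζ r s τ ≤
      X⁻¹ * (X ^ 2 + r * s) ^ (-ζ) * (1 + X ^ (2 * (1 / 2 + ζ)) * τ ^ (-(1 / 2 + ζ))) := by
  refine (heatProfile_le_of_scale hζ hrs hτ hX).trans ?_
  gcongr
  calc (min 1 (τ / X ^ 2)) ^ (-(1 / 2 + ζ)) * exp (-(r - s) ^ 2 / (4 * τ))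
      ≤ (min 1 (τ / X ^ 2)) ^ (-(1 / 2 + ζ)) := by
        refine mul_le_of_le_one_right (by positivity) (exp_le_one_iff.2 ?_)
        rw [neg_div, neg_nonpos]
        positivity
    _ ≤ 1 + (τ / X ^ 2) ^ (-(1 / 2 + ζ)) := min_one_rpow_neg_le (by positivity)
    _ = 1 + X ^ (2 * (1 / 2 + ζ)) * τ ^ (-(1 / 2 + ζ)) := by
        rw [div_rpow hτ.le (by positivity), sq_rpow_neg hX.le, rpow_neg hX.le, div_inv_eq_mul,
          mul_comm (τ ^ _)]

theorem heatProfile_le_min_one_div (hζ : 0 ≤ ζ) (hrs : 0 ≤ r * s) (hτ : 0 < τ)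
    (hD : 0 < |r - s|) :
    heatProfile ζ r s τ ≤ |r - s|⁻¹ * (|r - s| ^ 2 + r * s) ^ (-ζ) *
      (exp (1 / 4) * (4 * (1 / 2 + ζ + 1)) ^ (1 / 2 + ζ + 1) * min 1 (τ / |r - s| ^ 2)) := by
  refine (heatProfile_le_of_scale hζ hrs hτ hD).trans ?_
  gcongr _ * ?_
  rw [show -(r - s) ^ 2 / (4 * τ) = -(1 / (4 * (τ / |r - s| ^ 2))) by
    rw [← sq_abs (r - s)]; field_simp]
  exact exp_neg_mul_min_one_rpow_neg_le (by positivity) (by positivity)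

theorem le_heatProfile {y S B : ℝ} (hζ : 0 ≤ ζ) (hrs : 0 ≤ r * s) (hy : 0 < y)
    (hD : |r - s| ≤ y) (hyτ : y ^ 2 ≤ τ) (hτB : τ ≤ B * y ^ 2) (hyS : y ≤ S)
    (hrsS : r * s ≤ S ^ 2) :
    (2 * B) ^ (-(1 / 2) : ℝ) * (2 * B + 1) ^ (-ζ) * exp (-(1 / 4)) *
      (y⁻¹ * S ^ (-(2 * ζ))) ≤ heatProfile ζ r s τ := by
  have hτ : 0 < τ := (pow_pos hy 2).trans_le hyτ
  have hB : 0 < B := pos_of_mul_pos_left (hτ.trans_le hτB) (by positivity)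
  have hS : 0 < S := hy.trans_le hyS
  have hByS : B * y ^ 2 ≤ B * S ^ 2 := by gcongr
  have hsq : (r - s) ^ 2 ≤ y ^ 2 := sq_le_sq.2 (hD.trans (le_abs_self y))
  calc (2 * B) ^ (-(1 / 2) : ℝ) * (2 * B + 1) ^ (-ζ) * exp (-(1 / 4)) * (y⁻¹ * S ^ (-(2 * ζ)))
      = (2 * B * y ^ 2) ^ (-(1 / 2) : ℝ) * ((2 * B + 1) * S ^ 2) ^ (-ζ) * exp (-(1 / 4)) := by
        rw [mul_rpow (y := y ^ 2) (by positivity) (by positivity),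
          mul_rpow (y := S ^ 2) (by positivity) (by positivity), sq_rpow_neg_half hy.le,
          sq_rpow_neg hS.le]
        ring
    _ ≤ heatProfile ζ r s τ := by
        unfold heatProfile
        gcongr ?_ * ?_ * exp ?_
        · exact rpow_le_rpow_of_nonpos (by positivity) (by linarith) (by norm_num)
        · exact rpow_le_rpow_of_nonpos (by positivity) (by linarith) (by linarith)
        · rw [neg_div, neg_le_neg_iff, div_le_div_iff₀ (by positivity) (by norm_num)]
          linarith

end heatProfile

/-- The power expression comparable to the stable-subordinated kernel at time `t`: `d` stands for
the distance `|r - s|` and `S` for the size `r + s`. -/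
noncomputable def stableProfile (ζ α t d S : ℝ) : ℝ :=
  t * (t ^ (1 / α) + d) ^ (-(1 + α)) * (t ^ (1 / α) + S) ^ (-(2 * ζ))

section stableProfile

variable {ζ α t r s : ℝ}

theorem mul_rpow_one_div_rpow_neg (hα : α ≠ 0) (ht : 0 < t) : t * (t ^ (1 / α)) ^ (-α) = 1 := by
  rw [← rpow_mul ht.le, mul_neg, one_div_mul_cancel hα, rpow_neg_one, mul_inv_cancel₀ ht.ne']

theorem stableProfile_nonneg {d S : ℝ} (ht : 0 ≤ t) (hd : 0 ≤ d) (hS : 0 ≤ S) :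
    0 ≤ stableProfile ζ α t d S := by
  unfold stableProfile
  positivity

theorem mul_rpow_neg_mul_rpow_neg_le_stableProfile {X : ℝ} (hζ : 0 ≤ ζ) (hα : 0 ≤ α)
    (ht : 0 < t) (hr : 0 ≤ r) (hs : 0 ≤ s) (htX : t ^ (1 / α) ≤ X) (hD : |r - s| ≤ X) :
    t * X ^ (-(1 + α)) * (X ^ 2 + r * s) ^ (-ζ) ≤
      2 ^ (1 + α) * 8 ^ ζ * stableProfile ζ α t |r - s| (r + s) := by
  have ha : 0 < t ^ (1 / α) := by positivity
  have hX : 0 < X := ha.trans_le htX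
  have hD2 : (r - s) ^ 2 ≤ X ^ 2 := sq_le_sq.2 (hD.trans (le_abs_self X))
  have hsum : (t ^ (1 / α) + (r + s)) ^ 2 ≤ 8 * (X ^ 2 + r * s) := by
    have : (t ^ (1 / α) + (r + s)) ^ 2 ≤ (X + (r + s)) ^ 2 := by gcongr
    nlinarith [sq_nonneg (X - (r + s))]
  have hdist_rpow := rpow_neg_le_mul_rpow_neg (p := 1 + α)
    (show 0 < t ^ (1 / α) + |r - s| by positivity) zero_le_two
    (show t ^ (1 / α) + |r - s| ≤ 2 * X by linarith) (by positivity)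
  have hsum_rpow := rpow_neg_le_mul_rpow_neg (by positivity) (by norm_num) hsum hζ
  rw [sq_rpow_neg (by positivity)] at hsum_rpow
  calc t * X ^ (-(1 + α)) * (X ^ 2 + r * s) ^ (-ζ)
      ≤ t * (2 ^ (1 + α) * (t ^ (1 / α) + |r - s|) ^ (-(1 + α))) *
          (8 ^ ζ * (t ^ (1 / α) + (r + s)) ^ (-(2 * ζ))) := by gcongr
    _ = 2 ^ (1 + α) * 8 ^ ζ * stableProfile ζ α t |r - s| (r + s) := by
        rw [stableProfile]
        ring

end stableProfile

namespace IsStableLaw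

variable {ζ α t : ℝ} {μ : Measure ℝ}

theorem ae_heatProfile_nonneg {β r s : ℝ} (h : IsStableLaw β t μ) (hrs : 0 ≤ r * s) :
    0 ≤ᵐ[μ] heatProfile ζ r s := by
  filter_upwards [h.ae_pos] with τ hτ using heatProfile_nonneg hrs hτ.le

theorem integrable_one_add_const_mul_rpow_neg {β a : ℝ} (h : IsStableLaw β t μ) (hβ : 0 < β)
    (ht : 0 < t) (ha : 0 < a) (K : ℝ) : Integrable (fun τ => 1 + K * τ ^ (-a)) μ := by
  have := h.toIsProbabilityMeasure
  exact (integrable_const 1).add ((h.integrable_rpow_neg hβ ht ha).const_mul K)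

theorem integrable_heatProfile {β r s : ℝ} (h : IsStableLaw β t μ) (hβ : 0 < β) (ht : 0 < t)
    (hζ : 0 ≤ ζ) (hrs : 0 ≤ r * s) : Integrable (heatProfile ζ r s) μ := by
  have hdom := h.integrable_one_add_const_mul_rpow_neg hβ ht
    (show 0 < 1 / 2 + ζ by positivity) (1 ^ (2 * (1 / 2 + ζ)))
  refine (hdom.const_mul (1⁻¹ * (1 ^ 2 + r * s) ^ (-ζ))).mono'
    (measurable_heatProfile ζ r s).aestronglyMeasurable ?_
  filter_upwards [h.ae_pos] with τ hτ
  rw [norm_of_nonneg (heatProfile_nonneg hrs hτ.le)]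
  exact heatProfile_le_one_add_rpow_neg hζ hrs hτ one_pos

theorem rpow_mul_integral_rpow_neg {p : ℝ} (h : IsStableLaw (α / 2) t μ) (hα : 0 < α)
    (ht : 0 < t) (hp : 0 < p) :
    (t ^ (1 / α)) ^ (2 * p) * ∫ τ, τ ^ (-p) ∂μ =
      1 / (α / 2) * Gamma (p / (α / 2)) / Gamma p := by
  have hscale : (t ^ (1 / α)) ^ (2 * p) * t ^ (-p / (α / 2)) = 1 := by
    rw [← rpow_mul ht.le, ← rpow_add ht, show 1 / α * (2 * p) + -p / (α / 2) = 0 by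
      field_simp; ring, rpow_zero]
  rw [h.integral_rpow_neg (half_pos hα) ht hp]
  linear_combination (1 / (α / 2) * Gamma (p / (α / 2)) / Gamma p) * hscale

theorem integral_heatProfile_le_of_abs_sub_le {r s : ℝ} (h : IsStableLaw (α / 2) t μ)
    (hζ : 0 ≤ ζ) (hα : 0 < α) (ht : 0 < t) (hr : 0 ≤ r) (hs : 0 ≤ s)
    (hD : |r - s| ≤ t ^ (1 / α)) :
    ∫ τ, heatProfile ζ r s τ ∂μ ≤
      (1 + 1 / (α / 2) * Gamma ((1 / 2 + ζ) / (α / 2)) / Gamma (1 / 2 + ζ)) *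
        (2 ^ (1 + α) * 8 ^ ζ * stableProfile ζ α t |r - s| (r + s)) := by
  have := h.toIsProbabilityMeasure
  have hp : 0 < 1 / 2 + ζ := by positivity
  have hrs : 0 ≤ r * s := by positivity
  have hmoment := h.rpow_mul_integral_rpow_neg hα ht hp
  have hprofile := mul_rpow_neg_mul_rpow_neg_le_stableProfile hζ hα.le ht hr hs le_rfl hD
  have ha : 0 < t ^ (1 / α) := by positivity
  have hta : t * (t ^ (1 / α)) ^ (-(1 + α)) = (t ^ (1 / α))⁻¹ := by
    rw [neg_add, rpow_add ha, rpow_neg_one, mul_left_comm, mul_rpow_one_div_rpow_neg hα.ne' ht,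
      mul_one]
  rw [hta] at hprofile
  generalize t ^ (1 / α) = a at ha hmoment hprofile
  calc ∫ τ, heatProfile ζ r s τ ∂μ
      ≤ ∫ τ, a⁻¹ * (a ^ 2 + r * s) ^ (-ζ) *
          (1 + a ^ (2 * (1 / 2 + ζ)) * τ ^ (-(1 / 2 + ζ))) ∂μ := by
        refine integral_mono_ae (h.integrable_heatProfile (half_pos hα) ht hζ hrs)
          ((h.integrable_one_add_const_mul_rpow_neg (half_pos hα) ht hp _).const_mul _) ?_
        filter_upwards [h.ae_pos] with τ hτ
        exact heatProfile_le_one_add_rpow_neg hζ hrs hτ ha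
    _ = (1 + 1 / (α / 2) * Gamma ((1 / 2 + ζ) / (α / 2)) / Gamma (1 / 2 + ζ)) *
          (a⁻¹ * (a ^ 2 + r * s) ^ (-ζ)) := by
        rw [integral_const_mul, integral_add (integrable_const 1)
          ((h.integrable_rpow_neg (half_pos hα) ht hp).const_mul _), integral_const_mul, hmoment,
          integral_const, probReal_univ, one_smul, mul_comm]
    _ ≤ _ := by gcongr

theorem integral_heatProfile_le_of_le_abs_sub {r s : ℝ} (h : IsStableLaw (α / 2) t μ)
    (hζ : 0 ≤ ζ) (hα : 0 ≤ α) (ht : 0 < t) (hr : 0 ≤ r) (hs : 0 ≤ s)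
    (hD : t ^ (1 / α) ≤ |r - s|) :
    ∫ τ, heatProfile ζ r s τ ∂μ ≤
      2 * (exp (1 / 4) * (4 * (1 / 2 + ζ + 1)) ^ (1 / 2 + ζ + 1)) *
        (2 ^ (1 + α) * 8 ^ ζ * stableProfile ζ α t |r - s| (r + s)) := by
  have hrs : 0 ≤ r * s := by positivity
  have hprofile := mul_rpow_neg_mul_rpow_neg_le_stableProfile hζ hα ht hr hs hD le_rfl
  have hD0 : 0 < |r - s| := (rpow_pos_of_pos ht _).trans_le hD
  set D := |r - s|
  set A := D⁻¹ * (D ^ 2 + r * s) ^ (-ζ) with hA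
  set K := exp (1 / 4) * (4 * (1 / 2 + ζ + 1)) ^ (1 / 2 + ζ + 1)
  have : 0 ≤ A := by positivity
  have : 0 ≤ K := by positivity
  calc ∫ τ, heatProfile ζ r s τ ∂μ ≤ ∫ τ, A * (K * min 1 (τ / D ^ 2)) ∂μ := by
        refine integral_mono_of_nonneg (h.ae_heatProfile_nonneg hrs)
          (((h.integrable_min_one_div (pow_pos hD0 2)).const_mul K).const_mul A) ?_
        filter_upwards [h.ae_pos] with τ hτ
        exact heatProfile_le_min_one_div hζ hrs hτ hD0
    _ = A * (K * ∫ τ, min 1 (τ / D ^ 2) ∂μ) := by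
        rw [integral_const_mul, integral_const_mul]
    _ ≤ A * (K * (2 * (t * (D ^ 2) ^ (-(α / 2))))) := by
        gcongr
        exact h.integral_min_one_div_le (pow_pos hD0 2)
    _ = 2 * K * (t * D ^ (-(1 + α)) * (D ^ 2 + r * s) ^ (-ζ)) := by
        rw [sq_rpow_neg hD0.le, mul_div_cancel₀ _ two_ne_zero, neg_add, rpow_add hD0,
          rpow_neg_one, hA]
        ring
    _ ≤ _ := by gcongr

theorem exists_integral_heatProfile_le (hζ : 0 ≤ ζ) (hα : 0 < α) :
    ∃ C : ℝ, 0 < C ∧ ∀ (t r s : ℝ) (μ : Measure ℝ), IsStableLaw (α / 2) t μ → 0 < t → 0 ≤ r →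
      0 ≤ s → ∫ τ, heatProfile ζ r s τ ∂μ ≤ C * stableProfile ζ α t |r - s| (r + s) := by
  set M := 1 + 1 / (α / 2) * Gamma ((1 / 2 + ζ) / (α / 2)) / Gamma (1 / 2 + ζ)
  set K := 2 * (exp (1 / 4) * (4 * (1 / 2 + ζ + 1)) ^ (1 / 2 + ζ + 1))
  refine ⟨max M K * (2 ^ (1 + α) * 8 ^ ζ), by positivity, fun t r s μ h ht hr hs => ?_⟩
  have hprofile : 0 ≤ stableProfile ζ α t |r - s| (r + s) :=
    stableProfile_nonneg ht.le (abs_nonneg _) (by positivity)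
  rw [mul_assoc]
  rcases le_total |r - s| (t ^ (1 / α)) with hD | hD
  · refine (h.integral_heatProfile_le_of_abs_sub_le hζ hα ht hr hs hD).trans ?_
    gcongr
    exact le_max_left M K
  · refine (h.integral_heatProfile_le_of_le_abs_sub hζ hα.le ht hr hs hD).trans ?_
    gcongr
    exact le_max_right M K

theorem mul_measureReal_Ioc_le_integral_heatProfile {β r s y S B : ℝ} (h : IsStableLaw β t μ)
    (hβ : 0 < β) (ht : 0 < t) (hζ : 0 ≤ ζ) (hrs : 0 ≤ r * s) (hy : 0 < y) (hD : |r - s| ≤ y)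
    (hyS : y ≤ S) (hrsS : r * s ≤ S ^ 2) :
    (2 * B) ^ (-(1 / 2) : ℝ) * (2 * B + 1) ^ (-ζ) * exp (-(1 / 4)) * (y⁻¹ * S ^ (-(2 * ζ))) *
      μ.real (Ioc (y ^ 2) (B * y ^ 2)) ≤ ∫ τ, heatProfile ζ r s τ ∂μ := by
  have := h.toIsProbabilityMeasure
  have hi := h.integrable_heatProfile hβ ht hζ hrs
  have hnonneg := h.ae_heatProfile_nonneg hrs (ζ := ζ)
  calc _ ≤ ∫ τ in Ioc (y ^ 2) (B * y ^ 2), heatProfile ζ r s τ ∂μ :=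
        setIntegral_ge_of_const_le_real measurableSet_Ioc (measure_ne_top _ _)
          (fun τ hτ => le_heatProfile hζ hrs hy hD hτ.1.le hτ.2 hyS hrsS) hi.integrableOn
    _ ≤ ∫ τ, heatProfile ζ r s τ ∂μ := setIntegral_le_integral hi hnonneg

theorem exists_le_integral_heatProfile (hζ : 0 ≤ ζ) (hα : 0 < α) (hα2 : α < 2) :
    ∃ c : ℝ, 0 < c ∧ ∀ (t r s : ℝ) (μ : Measure ℝ), IsStableLaw (α / 2) t μ → 0 < t → 0 ≤ r →
      0 ≤ s → c * stableProfile ζ α t |r - s| (r + s) ≤ ∫ τ, heatProfile ζ r s τ ∂μ := by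
  obtain ⟨c, B, hc, hB, hmass⟩ := exists_le_measureReal_Ioc (half_pos hα) (by linarith)
  set k := (2 * B) ^ (-(1 / 2) : ℝ) * (2 * B + 1) ^ (-ζ) * exp (-(1 / 4))
  refine ⟨k * c, by positivity, fun t r s μ h ht hr hs => ?_⟩
  have hrs : 0 ≤ r * s := by positivity
  have ha : 0 < t ^ (1 / α) := by positivity
  have hta := mul_rpow_one_div_rpow_neg hα.ne' ht
  have hDrs : |r - s| ≤ r + s := abs_le.2 ⟨by linarith, by linarith⟩
  rw [stableProfile]
  generalize t ^ (1 / α) = a at ha hta ⊢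
  have hy : 0 < a + |r - s| := by positivity
  have hty : t * ((a + |r - s|) ^ 2) ^ (-(α / 2)) = t * (a + |r - s|) ^ (-α) := by
    rw [sq_rpow_neg hy.le, mul_div_cancel₀ _ two_ne_zero]
  have hty_le : t * (a + |r - s|) ^ (-α) ≤ 1 := by
    rw [← hta]
    gcongr t * ?_
    exact rpow_le_rpow_of_nonpos ha (by simp) (by linarith)
  calc k * c * (t * (a + |r - s|) ^ (-(1 + α)) * (a + (r + s)) ^ (-(2 * ζ)))
      = k * ((a + |r - s|)⁻¹ * (a + (r + s)) ^ (-(2 * ζ))) *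
          (c * (t * ((a + |r - s|) ^ 2) ^ (-(α / 2)))) := by
        rw [hty, neg_add, rpow_add hy, rpow_neg_one]
        ring
    _ ≤ k * ((a + |r - s|)⁻¹ * (a + (r + s)) ^ (-(2 * ζ))) *
          μ.real (Ioc ((a + |r - s|) ^ 2) (B * (a + |r - s|) ^ 2)) := by
        gcongr
        exact hmass t _ μ h ht.le (by positivity) (hty.trans_le hty_le)
    _ ≤ ∫ τ, heatProfile ζ r s τ ∂μ :=
        h.mul_measureReal_Ioc_le_integral_heatProfile (half_pos hα) ht hζ hrs hy (by linarith)
          (by linarith) (by nlinarith)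

end IsStableLaw

/-! ### The weighted inequality for the stable profile -/

section stableProfile

variable {ζ α t τ : ℝ}

theorem stableProfile_le_of_le_mul {T d d' S S' K : ℝ} (hζ : 0 ≤ ζ) (hα : 0 ≤ α) (ht : 0 < t)
    (htT : t ≤ T) (hd : 0 ≤ d) (hd' : 0 ≤ d') (hS : 0 ≤ S) (hS' : 0 ≤ S')
    (hK : 0 ≤ K) (hdd' : T ^ (1 / α) + d ≤ K * (t ^ (1 / α) + d'))
    (hSS' : T ^ (1 / α) + S ≤ K * (t ^ (1 / α) + S')) :
    stableProfile ζ α t d' S' ≤ K ^ (1 + α) * K ^ (2 * ζ) * stableProfile ζ α T d S := by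
  have hT : 0 < T := ht.trans_le htT
  have hdist := rpow_neg_le_mul_rpow_neg (p := 1 + α) (by positivity) hK hdd' (by positivity)
  have hsize := rpow_neg_le_mul_rpow_neg (p := 2 * ζ) (by positivity) hK hSS' (by positivity)
  calc stableProfile ζ α t d' S'
      ≤ T * (K ^ (1 + α) * (T ^ (1 / α) + d) ^ (-(1 + α))) *
          (K ^ (2 * ζ) * (T ^ (1 / α) + S) ^ (-(2 * ζ))) := by
        unfold stableProfile
        gcongr
    _ = K ^ (1 + α) * K ^ (2 * ζ) * stableProfile ζ α T d S := by
        rw [stableProfile]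
        ring

theorem div_rpow_mul_stableProfile_le {d r s z : ℝ} (hζ : 0 ≤ ζ) (ht : 0 < t) (hd : 0 ≤ d)
    (hr : 0 ≤ r) (hs : 0 ≤ s) (hz : 0 < z) :
    ((r + z) / (r + s + z)) ^ (2 * ζ) * stableProfile ζ α t d (r + z) ≤
      stableProfile ζ α t d (r + s) := by
  have ha : 0 < t ^ (1 / α) := by positivity
  have hscale : t ^ (1 / α) + (r + s) ≤
      (r + s + z) / (r + z) * (t ^ (1 / α) + (r + z)) := by
    rw [div_mul_eq_mul_div, le_div_iff₀ (by positivity)]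
    nlinarith [mul_nonneg ha.le hs]
  have hsize := rpow_neg_le_mul_rpow_neg (p := 2 * ζ) (by positivity) (by positivity) hscale
    (by positivity)
  calc ((r + z) / (r + s + z)) ^ (2 * ζ) * stableProfile ζ α t d (r + z)
      ≤ ((r + z) / (r + s + z)) ^ (2 * ζ) * (t * (t ^ (1 / α) + d) ^ (-(1 + α)) *
          (((r + s + z) / (r + z)) ^ (2 * ζ) * (t ^ (1 / α) + (r + s)) ^ (-(2 * ζ)))) := by
        rw [stableProfile]
        gcongr
    _ = ((r + z) / (r + s + z) * ((r + s + z) / (r + z))) ^ (2 * ζ) *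
          stableProfile ζ α t d (r + s) := by
        rw [mul_rpow (by positivity) (by positivity), stableProfile]
        ring
    _ = stableProfile ζ α t d (r + s) := by
        rw [div_mul_div_cancel₀ (by positivity), div_self (by positivity), one_rpow, one_mul]

theorem min_stableProfile_le_of_le {d d₁ d₂ S : ℝ} (hζ : 0 ≤ ζ) (hα : 0 ≤ α) (ht : 0 < t)
    (htτ : t ≤ τ) (hd : 0 ≤ d) (hd₁ : 0 ≤ d₁) (hd₂ : 0 ≤ d₂) (htri : d ≤ d₁ + d₂) (hdS : d ≤ S) :
    min (stableProfile ζ α t d₁ S) (stableProfile ζ α τ d₂ S) ≤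
      (2 * 2 ^ (1 / α) + 2) ^ (1 + α) * (2 * 2 ^ (1 / α) + 2) ^ (2 * ζ) *
        stableProfile ζ α (t + τ) d S := by
  have hτ : 0 < τ := ht.trans_le htτ
  have hS : 0 ≤ S := hd.trans hdS
  have ha : 0 < t ^ (1 / α) := by positivity
  have hb : 0 < τ ^ (1 / α) := by positivity
  have hκ : (0 : ℝ) < 2 ^ (1 / α) := by positivity
  have hsum : (t + τ) ^ (1 / α) ≤ 2 ^ (1 / α) * τ ^ (1 / α) := by
    rw [← mul_rpow zero_le_two hτ.le]
    gcongr
    linarith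
  by_cases hcase : d ≤ τ ^ (1 / α) ∨ d ≤ 2 * d₂
  · refine (min_le_right _ _).trans (stableProfile_le_of_le_mul hζ hα hτ (by linarith) hd hd₂ hS hS
      (by positivity) ?_ (by nlinarith))
    rcases hcase with h | h <;> nlinarith
  · push Not at hcase
    obtain ⟨hdτ, hdd₂⟩ := hcase
    have hd₁' : d ≤ 2 * d₁ := by linarith
    exact (min_le_left _ _).trans (stableProfile_le_of_le_mul hζ hα ht (by linarith) hd hd₁ hS hS
      (by positivity) (by nlinarith [hd₁']) (by nlinarith))

theorem min_stableProfile_le {d d₁ d₂ S : ℝ} (hζ : 0 ≤ ζ) (hα : 0 ≤ α) (ht : 0 < t)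
    (hτ : 0 < τ) (hd : 0 ≤ d) (hd₁ : 0 ≤ d₁) (hd₂ : 0 ≤ d₂) (htri : d ≤ d₁ + d₂) (hdS : d ≤ S) :
    min (stableProfile ζ α t d₁ S) (stableProfile ζ α τ d₂ S) ≤
      (2 * 2 ^ (1 / α) + 2) ^ (1 + α) * (2 * 2 ^ (1 / α) + 2) ^ (2 * ζ) *
        stableProfile ζ α (t + τ) d S := by
  rcases le_total t τ with h | h
  · exact min_stableProfile_le_of_le hζ hα ht h hd hd₁ hd₂ htri hdS
  · rw [min_comm, add_comm t τ]
    exact min_stableProfile_le_of_le hζ hα hτ h hd hd₂ hd₁ (by linarith) hdS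

theorem min_div_rpow_mul_stableProfile_le {r s z : ℝ} (hζ : 0 ≤ ζ) (hα : 0 ≤ α) (ht : 0 < t)
    (hτ : 0 < τ) (hr : 0 ≤ r) (hs : 0 ≤ s) (hz : 0 < z) :
    min (((r + z) / (r + s + z)) ^ (2 * ζ) * stableProfile ζ α t |r - z| (r + z))
        (((s + z) / (r + s + z)) ^ (2 * ζ) * stableProfile ζ α τ |z - s| (z + s)) ≤
      (2 * 2 ^ (1 / α) + 2) ^ (1 + α) * (2 * 2 ^ (1 / α) + 2) ^ (2 * ζ) *
        stableProfile ζ α (t + τ) |r - s| (r + s) := by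
  have hleft := div_rpow_mul_stableProfile_le (α := α) hζ ht (abs_nonneg (r - z)) hr hs hz
  have hright := div_rpow_mul_stableProfile_le (α := α) hζ hτ (abs_nonneg (z - s)) hs hr hz
  rw [add_comm s r, add_comm s z] at hright
  rw [add_comm s z]
  exact (min_le_min hleft hright).trans <| min_stableProfile_le hζ hα ht hτ (abs_nonneg _)
    (abs_nonneg _) (abs_nonneg _) (abs_sub_le r z s) (abs_le.2 ⟨by linarith, by linarith⟩)

end stableProfile

/-! ### The subordinated kernel -/

theorem besselI_eq_toReal_tsum {ν x : ℝ} (hν : -1 ≤ ν) (hx : 0 ≤ x) :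
    besselI ν x = (∑' k : ℕ, ENNReal.ofReal
      ((x / 2) ^ (2 * (k : ℝ) + ν) / (k ! * Gamma ((k : ℝ) + ν + 1)))).toReal := by
  rw [ENNReal.tsum_toReal_eq fun k => ENNReal.ofReal_ne_top, besselI]
  refine tsum_congr fun k => (ENNReal.toReal_ofReal ?_).symm
  have hΓ : 0 ≤ Gamma ((k : ℝ) + ν + 1) :=
    Gamma_nonneg_of_nonneg (by linarith [k.cast_nonneg (α := ℝ)])
  positivity

theorem aemeasurable_besselHeat {ζ r s : ℝ} (hζ : -(1 / 2) ≤ ζ) (hrs : 0 ≤ r * s)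
    {μ : Measure ℝ} (hμ : ∀ᵐ τ ∂μ, 0 < τ) : AEMeasurable (fun τ => besselHeat ζ τ r s) μ := by
  unfold besselHeat
  refine .mul (by fun_prop) (.congr (Measurable.aemeasurable ?_) (hμ.mono fun τ hτ =>
    (besselI_eq_toReal_tsum (by linarith : -1 ≤ ζ - 1 / 2) (by positivity)).symm))
  fun_prop

theorem besselHeat_nonneg {ζ τ r s : ℝ} (hζ : 0 ≤ ζ) (hτ : 0 < τ) (hr : 0 < r) (hs : 0 < s) :
    0 ≤ besselHeat ζ τ r s :=
  mul_nonneg (by positivity) (besselI_nonneg hζ (by positivity))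

theorem IsStableLaw.integrable_besselHeat {β ζ t r s : ℝ} {μ : Measure ℝ}
    (h : IsStableLaw β t μ) (hβ : 0 < β) (ht : 0 < t) (hζ : 0 ≤ ζ) (hr : 0 < r) (hs : 0 < s) :
    Integrable (fun τ => besselHeat ζ τ r s) μ := by
  obtain ⟨_, C, _, _, hheat⟩ := besselHeat_bounds hζ
  have hrs : 0 ≤ r * s := by positivity
  refine ((h.integrable_heatProfile hβ ht hζ hrs).const_mul C).mono'
    (aemeasurable_besselHeat (by linarith) hrs h.ae_pos).aestronglyMeasurable ?_
  filter_upwards [h.ae_pos] with τ hτ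
  rw [norm_of_nonneg (besselHeat_nonneg hζ hτ hr hs)]
  exact (hheat τ r s hτ hr hs).2

theorem exists_bounds_integral_besselHeat {ζ α : ℝ} (hζ : 0 ≤ ζ) (hα : 0 < α) (hα2 : α < 2) :
    ∃ c C : ℝ, 0 < c ∧ 0 < C ∧ ∀ (t r s : ℝ) (μ : Measure ℝ), IsStableLaw (α / 2) t μ → 0 < t →
      0 < r → 0 < s → c * stableProfile ζ α t |r - s| (r + s) ≤ ∫ τ, besselHeat ζ τ r s ∂μ ∧
      ∫ τ, besselHeat ζ τ r s ∂μ ≤ C * stableProfile ζ α t |r - s| (r + s) := by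
  obtain ⟨c₁, C₁, hc₁, hC₁, hheat⟩ := besselHeat_bounds hζ
  obtain ⟨c₂, hc₂, hlow⟩ := IsStableLaw.exists_le_integral_heatProfile hζ hα hα2
  obtain ⟨C₂, hC₂, hup⟩ := IsStableLaw.exists_integral_heatProfile_le hζ hα
  refine ⟨c₁ * c₂, C₁ * C₂, by positivity, by positivity, fun t r s μ h ht hr hs => ?_⟩
  have hprofile := h.integrable_heatProfile (half_pos hα) ht hζ (mul_pos hr hs).le
  have hbessel := h.integrable_besselHeat (half_pos hα) ht hζ hr hs
  constructor
  · calc c₁ * c₂ * stableProfile ζ α t |r - s| (r + s) ≤ c₁ * ∫ τ, heatProfile ζ r s τ ∂μ := by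
          rw [mul_assoc]
          gcongr
          exact hlow t r s μ h ht hr.le hs.le
      _ = ∫ τ, c₁ * heatProfile ζ r s τ ∂μ := (integral_const_mul _ _).symm
      _ ≤ ∫ τ, besselHeat ζ τ r s ∂μ := integral_mono_ae (hprofile.const_mul c₁) hbessel
          (h.ae_pos.mono fun τ hτ => (hheat τ r s hτ hr hs).1)
  · calc ∫ τ, besselHeat ζ τ r s ∂μ ≤ ∫ τ, C₁ * heatProfile ζ r s τ ∂μ :=
          integral_mono_ae hbessel (hprofile.const_mul C₁)
            (h.ae_pos.mono fun τ hτ => (hheat τ r s hτ hr hs).2)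
      _ = C₁ * ∫ τ, heatProfile ζ r s τ ∂μ := integral_const_mul _ _
      _ ≤ C₁ * C₂ * stableProfile ζ α t |r - s| (r + s) := by
          rw [mul_assoc]
          gcongr
          exact hup t r s μ h ht hr.le hs.le

/-- The measure on `ℝ` carried by `(0, ∞)` with density `σ t` there: the law at time `t` of the
subordinator with densities `σ`. -/
noncomputable def subordinatorLaw (σ : ℝ → ℝ → ℝ) (t : ℝ) : Measure ℝ :=
  (volume.restrict (Ioi 0)).withDensity fun τ => ENNReal.ofReal (σ t τ)

namespace IsStableSubordinatorDensity

variable {α t : ℝ} {σ : ℝ → ℝ → ℝ}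

theorem integral_subordinatorLaw (hσ : IsStableSubordinatorDensity α σ) (ht : 0 < t)
    (f : ℝ → ℝ) : ∫ τ, f τ ∂subordinatorLaw σ t = ∫ τ in Ioi 0, f τ * σ t τ := by
  rw [subordinatorLaw, integral_withDensity_eq_integral_toReal_smul
    (hσ.2.1 t ht).ennreal_ofReal (by simp)]
  refine setIntegral_congr_fun measurableSet_Ioi fun τ hτ => ?_
  simp only [ENNReal.toReal_ofReal (hσ.1 t ht τ hτ), smul_eq_mul, mul_comm]

theorem setIntegral_eq_one (hσ : IsStableSubordinatorDensity α σ) (hα : α ≠ 0) (ht : 0 < t) :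
    ∫ τ in Ioi 0, σ t τ = 1 := by
  simpa [zero_rpow (div_ne_zero hα two_ne_zero)] using hσ.2.2 t 0 ht le_rfl

theorem isStableLaw (hσ : IsStableSubordinatorDensity α σ) (hα : α ≠ 0) (ht : 0 < t) :
    IsStableLaw (α / 2) t (subordinatorLaw σ t) := by
  have hone := hσ.setIntegral_eq_one hα ht
  have hint : IntegrableOn (σ t) (Ioi 0) := .of_integral_ne_zero (by rw [hone]; exact one_ne_zero)
  have hnonneg : 0 ≤ᵐ[volume.restrict (Ioi 0)] σ t :=
    (ae_restrict_mem measurableSet_Ioi).mono (hσ.1 t ht)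
  refine ⟨⟨?_⟩, withDensity_absolutelyContinuous _ _ (ae_restrict_mem measurableSet_Ioi),
    fun l hl => ?_⟩
  · rw [subordinatorLaw, withDensity_apply _ .univ, Measure.restrict_univ,
      ← ofReal_integral_eq_lintegral_ofReal hint hnonneg, hone, ENNReal.ofReal_one]
  · rw [hσ.integral_subordinatorLaw ht, hσ.2.2 t l ht hl]

theorem exists_bounds_subKernel (hσ : IsStableSubordinatorDensity α σ) {ζ : ℝ} (hζ : 0 ≤ ζ)
    (hα : 0 < α) (hα2 : α < 2) :
    ∃ c C : ℝ, 0 < c ∧ 0 < C ∧ ∀ t r s : ℝ, 0 < t → 0 < r → 0 < s →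
      c * stableProfile ζ α t |r - s| (r + s) ≤ subKernel ζ σ t r s ∧
      subKernel ζ σ t r s ≤ C * stableProfile ζ α t |r - s| (r + s) := by
  obtain ⟨c, C, hc, hC, h⟩ := exists_bounds_integral_besselHeat hζ hα hα2
  refine ⟨c, C, hc, hC, fun t r s ht hr hs => ?_⟩
  rw [subKernel, ← hσ.integral_subordinatorLaw ht]
  exact h t r s _ (hσ.isStableLaw hα.ne' ht) ht hr hs

end IsStableSubordinatorDensity

theorem stmt11 (ζ α : ℝ) (hζ : 0 ≤ ζ) (hα0 : 0 < α) (hα2 : α < 2)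
    (σ : ℝ → ℝ → ℝ) (hσ : IsStableSubordinatorDensity α σ) :
    ∃ C : ℝ, 0 < C ∧
      ∀ r s z t τ : ℝ, 0 < r → 0 < s → 0 < z → 0 < t → 0 < τ →
        min (((r + z) / (r + s + z)) ^ (2 * ζ) * subKernel ζ σ t r z)
            (((s + z) / (r + s + z)) ^ (2 * ζ) * subKernel ζ σ τ z s)
          ≤ C * subKernel ζ σ (t + τ) r s := by
  obtain ⟨c, C, hc, hC, h⟩ := hσ.exists_bounds_subKernel hζ hα0 hα2
  set K : ℝ := (2 * 2 ^ (1 / α) + 2) ^ (1 + α) * (2 * 2 ^ (1 / α) + 2) ^ (2 * ζ)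
  refine ⟨C * K / c, by positivity, fun r s z t τ hr hs hz ht hτ => ?_⟩
  calc _ ≤ min (((r + z) / (r + s + z)) ^ (2 * ζ) * (C * stableProfile ζ α t |r - z| (r + z)))
        (((s + z) / (r + s + z)) ^ (2 * ζ) * (C * stableProfile ζ α τ |z - s| (z + s))) := by
        gcongr
        exacts [(h t r z ht hr hz).2, (h τ z s hτ hz hs).2]
    _ = C * min (((r + z) / (r + s + z)) ^ (2 * ζ) * stableProfile ζ α t |r - z| (r + z))
        (((s + z) / (r + s + z)) ^ (2 * ζ) * stableProfile ζ α τ |z - s| (z + s)) := by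
        rw [mul_left_comm _ C, mul_left_comm _ C, mul_min_of_nonneg _ _ hC.le]
    _ ≤ C * (K * stableProfile ζ α (t + τ) |r - s| (r + s)) := by
        gcongr
        exact min_div_rpow_mul_stableProfile_le hζ hα0.le ht hτ hr.le hs.le hz
    _ = C * K / c * (c * stableProfile ζ α (t + τ) |r - s| (r + s)) := by field_simp
    _ ≤ _ := by
        gcongr
        exact (h (t + τ) r s (by positivity) hr hs).1
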